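/- Let N ≥ 2, p > 1, p − 1 < q < p and R > 0, and let u be a strong solution of (E) on ℝ^N ∖ \overline{B}_R(0) (the complement of the closed ball of radius R centered at 0). Then there exists M ∈ ℝ such that u(x) → M as |x| → ∞. -/

import Mathlib

open Metric Set Filter Topology MeasureTheory

/-- The vector field `x ↦ |∇u(x)|^{p-2} ∇u(x)`. -/
noncomputable def pGradField {N : ℕ} (p : ℝ) (u : EuclideanSpace ℝ (Fin N) → ℝ)
    (x : EuclideanSpace ℝ (Fin N)) : EuclideanSpace ℝ (Fin N) :=
  ‖gradient u x‖ ^ (p - 2) • gradient u x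

/-- A strong solution of `(E) : -Δ_p u + |∇u|^q = 0` on an open set `G ⊆ ℝ^N`. -/
def IsStrongSolution {N : ℕ} (p q : ℝ) (G : Set (EuclideanSpace ℝ (Fin N)))
    (u : EuclideanSpace ℝ (Fin N) → ℝ) : Prop :=
  ContDiffOn ℝ 1 u G ∧
  ContDiffOn ℝ 3 u {x | x ∈ G ∧ gradient u x ≠ 0} ∧
  ∀ x ∈ G, DifferentiableAt ℝ (pGradField p u) x ∧
    LinearMap.trace ℝ (EuclideanSpace ℝ (Fin N))
      (fderiv ℝ (pGradField p u) x : EuclideanSpace ℝ (Fin N) →ₗ[ℝ] EuclideanSpace ℝ (Fin N))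
      = ‖gradient u x‖ ^ q

/-!
The proof is Bernstein's method. Where `∇u ≠ 0` the equation reads
`tr (A D²u) = ‖∇u‖^σ` with `A = 1 + (p - 2) ∇u ⊗ ∇u / ‖∇u‖²` and `σ = q - p + 2 > 1`.
Differentiating it along `∇u` and using `(tr D²u)² ≤ N tr (D²u)²` shows that `z = ‖∇u‖²` satisfies
`tr (A D²z) ≥ c z^σ - C ‖∇z‖² / z`. Comparing `z` with the barrier
`K (r² - ‖y - c‖²)^(-2 / (σ - 1))`, which blows up on the boundary of a ball of radius `r`, gives
the interior estimate `‖∇u(c)‖ ≤ C r^(-1 / (q - p + 1))`. In the exterior domain one may take `r`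
proportional to `‖x‖`; since `q < p` the decay exponent exceeds `1`, so `∇u` is integrable along
rays, the oscillation of `u` over spheres tends to zero, and `u` is Cauchy at infinity.
-/

section

open scoped Gradient RealInnerProductSpace

variable {E : Type*} [NormedAddCommGroup E] [InnerProductSpace ℝ E]

section Gradient

variable [CompleteSpace E] {u : E → ℝ} {x : E}

theorem contDiffAt_gradient {n m : WithTop ℕ∞} (hu : ContDiffAt ℝ n u x) (h : m + 1 ≤ n) :
    ContDiffAt ℝ m (∇ u) x :=
  (InnerProductSpace.toDual ℝ E).symm.contDiff.contDiffAt.comp x (hu.fderiv_right h)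

theorem differentiableAt_gradient (hu : ContDiffAt ℝ 2 u x) : DifferentiableAt ℝ (∇ u) x :=
  (contDiffAt_gradient hu (m := 1) (by norm_num)).differentiableAt (by norm_num)

theorem inner_fderiv_gradient (a b : E) :
    ⟪fderiv ℝ (∇ u) x a, b⟫ = fderiv ℝ (fderiv ℝ u) x a b := by
  have hd : fderiv ℝ u = InnerProductSpace.toDual ℝ E ∘ ∇ u := toDual_comp_gradient.symm
  rw [hd, LinearIsometryEquiv.comp_fderiv']
  rfl

theorem inner_fderiv_gradient_comm (hu : ContDiffAt ℝ 2 u x) (a b : E) :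
    ⟪fderiv ℝ (∇ u) x a, b⟫ = ⟪a, fderiv ℝ (∇ u) x b⟫ := by
  rw [real_inner_comm _ a, inner_fderiv_gradient, inner_fderiv_gradient]
  exact (hu.isSymmSndFDerivAt (by simp)).eq a b

theorem hasGradientAt_norm_gradient_sq (hu : ContDiffAt ℝ 2 u x) :
    HasGradientAt (fun y => ‖∇ u y‖ ^ 2) ((2 : ℝ) • fderiv ℝ (∇ u) x (∇ u x)) x := by
  refine ((differentiableAt_gradient hu).hasFDerivAt.norm_sq).congr_fderiv ?_
  ext a
  simp [inner_fderiv_gradient_comm hu]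

theorem fderiv_gradient_norm_gradient_sq (hu : ContDiffAt ℝ 3 u x) :
    fderiv ℝ (∇ fun y => ‖∇ u y‖ ^ 2) x =
      (2 : ℝ) • (fderiv ℝ (fderiv ℝ (∇ u)) x (∇ u x) + fderiv ℝ (∇ u) x ∘L fderiv ℝ (∇ u) x) := by
  have hV : ContDiffAt ℝ 2 (∇ u) x := contDiffAt_gradient hu (by norm_num)
  have hgrad : (∇ fun y => ‖∇ u y‖ ^ 2) =ᶠ[𝓝 x] fun y => (2 : ℝ) • fderiv ℝ (∇ u) y (∇ u y) := by
    filter_upwards [(hu.of_le (by norm_num : (2 : WithTop ℕ∞) ≤ 3)).eventually (by simp)] with y hy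
    exact (hasGradientAt_norm_gradient_sq hy).gradient
  have hH : DifferentiableAt ℝ (fderiv ℝ (∇ u)) x :=
    (hV.fderiv_right (m := 1) (by norm_num)).differentiableAt (by norm_num)
  have hprod := (hH.hasFDerivAt.clm_apply
    (hV.differentiableAt (by norm_num)).hasFDerivAt).const_smul (2 : ℝ)
  rw [hgrad.fderiv_eq]
  refine hprod.fderiv.trans ?_
  ext a
  simp [(hV.isSymmSndFDerivAt (by simp)).eq a, add_comm]

end Gradient

/-- The normalized `p`-Laplacian in algebraic form: the trace of `H` against
`1 + (p - 2) v ⊗ v / ‖v‖²`. For `v = ∇u` and `H = D²u` it is `‖∇u‖^(2-p) Δ_p u`. -/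
noncomputable def pTrace (p : ℝ) (v : E) (H : E →L[ℝ] E) : ℝ :=
  LinearMap.trace ℝ E H + (p - 2) * (⟪H v, v⟫ / ‖v‖ ^ 2)

section PTrace

variable {p : ℝ} {v : E}

theorem pTrace_add (H K : E →L[ℝ] E) : pTrace p v (H + K) = pTrace p v H + pTrace p v K := by
  simp only [pTrace, ContinuousLinearMap.toLinearMap_add, map_add, add_apply, inner_add_left,
    add_div]
  ring

theorem pTrace_smul (c : ℝ) (H : E →L[ℝ] E) : pTrace p v (c • H) = c * pTrace p v H := by
  simp only [pTrace, ContinuousLinearMap.toLinearMap_smul, map_smul, smul_apply,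
    real_inner_smul_left, smul_eq_mul]
  ring

theorem exists_pTrace_eq_sum [FiniteDimensional ℝ E] (hp : 1 ≤ p) (hv : v ≠ 0) :
    ∃ (s : Finset E) (b : OrthonormalBasis s ℝ E) (c : s → ℝ), (∀ i, 0 ≤ c i ∧ c i ≤ p) ∧
      ∀ H : E →L[ℝ] E, pTrace p v H = ∑ i, c i * ⟪H (b i), b i⟫ := by
  classical
  -- The form `1 + (p - 2) v ⊗ v / ‖v‖²` is diagonal in any orthonormal basis containing `v / ‖v‖`.
  let e : E := ‖v‖⁻¹ • v
  have hnorm : ‖e‖ = 1 := norm_smul_inv_norm (𝕜 := ℝ) hv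
  have horth : Orthonormal ℝ ((↑) : ({e} : Set E) → E) := by
    refine ⟨fun i => ?_, fun i j hij => absurd (Subsingleton.elim i j) hij⟩
    rw [i.2, hnorm]
  obtain ⟨s, b, hes, hb⟩ := horth.exists_orthonormalBasis_extension
  let j : s := ⟨e, hes rfl⟩
  refine ⟨s, b, fun i => 1 + if i = j then p - 2 else 0, fun i => ?_, fun H => ?_⟩
  · dsimp only
    split_ifs <;> constructor <;> linarith
  · have hj : b j = ‖v‖⁻¹ • v := by rw [hb]
    have hratio : ⟪v, H v⟫ / ‖v‖ ^ 2 = ⟪b j, H (b j)⟫ := by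
      simp only [hj, map_smul, real_inner_smul_left, real_inner_smul_right]
      ring
    simp only [pTrace, LinearMap.trace_eq_sum_inner _ b, real_inner_comm, hratio, add_mul,
      one_mul, ite_mul, zero_mul, Finset.sum_add_distrib, Finset.sum_ite_eq', Finset.mem_univ,
      if_true, ContinuousLinearMap.coe_coe]

theorem pTrace_le [FiniteDimensional ℝ E] (hp : 1 ≤ p) (hv : v ≠ 0) {α β : ℝ} (hα : 0 ≤ α)
    (hβ : 0 ≤ β) {w : E} {H : E →L[ℝ] E}
    (hH : ∀ e, ⟪H e, e⟫ ≤ α * ‖e‖ ^ 2 + β * ⟪w, e⟫ ^ 2) :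
    pTrace p v H ≤ p * (α * Module.finrank ℝ E + β * ‖w‖ ^ 2) := by
  obtain ⟨s, b, c, hc, hsum⟩ := exists_pTrace_eq_sum hp hv
  calc pTrace p v H = ∑ i, c i * ⟪H (b i), b i⟫ := hsum H
    _ ≤ ∑ i, p * (α + β * ⟪w, b i⟫ ^ 2) := by
        refine Finset.sum_le_sum fun i _ => ?_
        have hi := hH (b i)
        rw [b.norm_eq_one, one_pow, mul_one] at hi
        have hpos : 0 ≤ α + β * ⟪w, b i⟫ ^ 2 := by positivity
        exact (mul_le_mul_of_nonneg_left hi (hc i).1).trans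
          (mul_le_mul_of_nonneg_right (hc i).2 hpos)
    _ = p * (α * Module.finrank ℝ E + β * ‖w‖ ^ 2) := by
        have hw : ∑ i, ⟪w, b i⟫ ^ 2 = ‖w‖ ^ 2 := by
          simpa [real_inner_comm] using b.sum_sq_norm_inner_left w
        rw [← Finset.mul_sum, Finset.sum_add_distrib, ← Finset.mul_sum, hw, Finset.sum_const,
          Finset.card_univ, ← Module.finrank_eq_card_basis b.toBasis, nsmul_eq_mul, mul_comm α]

theorem hasFDerivAt_norm_rpow_of_ne_zero (σ : ℝ) (hv : v ≠ 0) :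
    HasFDerivAt (fun w : E => ‖w‖ ^ σ) ((σ * ‖v‖ ^ (σ - 2)) • innerSL ℝ v) v := by
  have hsq : HasFDerivAt (fun w : E => (‖w‖ ^ 2) ^ (σ / 2)) _ v :=
    (hasFDerivAt_id v).norm_sq.rpow_const (p := σ / 2) (Or.inl (by simpa using hv))
  have hnorm (w : E) (τ : ℝ) : (‖w‖ ^ 2) ^ τ = ‖w‖ ^ (2 * τ) := by
    rw [Real.rpow_mul (norm_nonneg w), Real.rpow_two]
  simp only [hnorm, id] at hsq
  convert! hsq using 1
  · ring_nf
  · ext a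
    simp
    ring_nf

theorem trace_fderiv_norm_rpow_smul [FiniteDimensional ℝ E] {V : E → E} {A : E →L[ℝ] E} {x : E}
    (hV : HasFDerivAt V A x) (h0 : V x ≠ 0) :
    LinearMap.trace ℝ E (fderiv ℝ (fun y => ‖V y‖ ^ (p - 2) • V y) x : E →L[ℝ] E) =
      ‖V x‖ ^ (p - 2) * pTrace p (V x) A := by
  have hd : HasFDerivAt (fun y => ‖V y‖ ^ (p - 2) • V y) _ x :=
    ((hasFDerivAt_norm_rpow_of_ne_zero (p - 2) h0).comp x hV).smul hV
  have hpow : ‖V x‖ ^ (p - 2 - 2) = ‖V x‖ ^ (p - 2) / ‖V x‖ ^ 2 := by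
    rw [Real.rpow_sub (norm_pos_iff.2 h0), Real.rpow_two]
  rw [hd.fderiv]
  simp only [ContinuousLinearMap.toLinearMap_add, pTrace]
  simp [LinearMap.trace_smulRight, hpow, real_inner_comm]
  ring

end PTrace

theorem hasDerivAt_pTrace [FiniteDimensional ℝ E] (p : ℝ) {V : ℝ → E} {H : ℝ → E →L[ℝ] E} {V' : E}
    {H' : E →L[ℝ] E} {t : ℝ} (hV : HasDerivAt V V' t) (hH : HasDerivAt H H' t) (h0 : V t ≠ 0) :
    HasDerivAt (fun s => pTrace p (V s) (H s))
      (pTrace p (V t) H' + (p - 2) * ((⟪H t V', V t⟫ + ⟪H t (V t), V'⟫) / ‖V t‖ ^ 2 -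
        2 * ⟪H t (V t), V t⟫ * ⟪V t, V'⟫ / (‖V t‖ ^ 2) ^ 2)) t := by
  let traceCLM : (E →L[ℝ] E) →L[ℝ] ℝ :=
    (LinearMap.trace ℝ E ∘ₗ ContinuousLinearMap.coeLM ℝ).toContinuousLinearMap
  have htrace : HasDerivAt (fun s => LinearMap.trace ℝ E (H s)) (LinearMap.trace ℝ E H') t :=
    traceCLM.hasFDerivAt.comp_hasDerivAt t hH
  have hratio := ((hH.clm_apply hV).inner ℝ hV).div hV.norm_sq (by simpa using h0)
  refine (htrace.add (hratio.const_mul (p - 2))).congr_deriv ?_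
  have hne : ‖V t‖ ≠ 0 := norm_ne_zero_iff.2 h0
  simp only [pTrace, inner_add_left]
  field_simp
  ring

-- For `H = D²u`: `S` is the source `‖∇u‖^σ`, `κ` the Rayleigh quotient of `H` at `∇u`,
-- `a = ‖H ∇u‖² / ‖∇u‖²`, `T = tr H²`, and `S - b κ = tr H` by the equation with `b = p - 2`.
theorem sq_le_of_bernstein_identity {n b σ S κ a T P : ℝ} (hn : 0 ≤ n) (hκ : κ ^ 2 ≤ a)
    (hT : (S - b * κ) ^ 2 ≤ n * T) (hP : P = 2 * (T + σ * S * κ - b * (a - 2 * κ ^ 2))) :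
    S ^ 2 ≤ 2 * n * P + 4 * ((n * σ) ^ 2 + n * |b| + b ^ 2) * a := by
  have hb : n * (b * (a - 2 * κ ^ 2)) ≤ n * (|b| * a) := by
    have habs : |a - 2 * κ ^ 2| ≤ a := abs_le.2 ⟨by linarith, by linarith [sq_nonneg κ]⟩
    gcongr n * ?_
    calc b * (a - 2 * κ ^ 2) ≤ |b| * |a - 2 * κ ^ 2| := (le_abs_self _).trans_eq (abs_mul _ _)
      _ ≤ |b| * a := by gcongr
  have hYoung : -(2 * n * σ * S * κ) ≤ S ^ 2 / 2 + 2 * (n * σ) ^ 2 * a := by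
    have hκ' : (n * σ) ^ 2 * κ ^ 2 ≤ (n * σ) ^ 2 * a := by gcongr
    linarith [sq_nonneg (S + 2 * (n * σ) * κ)]
  have hsplit : S ^ 2 ≤ 2 * (n * T) + 2 * (b ^ 2 * a) := by
    have hκ' : b ^ 2 * κ ^ 2 ≤ b ^ 2 * a := by gcongr
    linarith [sq_nonneg (S - 2 * b * κ)]
  rw [hP]
  linarith

section Bernstein

variable [FiniteDimensional ℝ E] {p σ : ℝ} {u : E → ℝ} {x v : E} {H : E →L[ℝ] E}

theorem pTrace_fderiv_fderiv_gradient (hu : ContDiffAt ℝ 3 u x) (hv : ∇ u x = v)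
    (hH : fderiv ℝ (∇ u) x = H) (h0 : v ≠ 0)
    (heq : ∀ᶠ y in 𝓝 x, pTrace p (∇ u y) (fderiv ℝ (∇ u) y) = ‖∇ u y‖ ^ σ) :
    pTrace p v (fderiv ℝ (fderiv ℝ (∇ u)) x v) =
      σ * ‖v‖ ^ σ * (⟪H v, v⟫ / ‖v‖ ^ 2) -
        2 * (p - 2) * (‖H v‖ ^ 2 / ‖v‖ ^ 2 - (⟪H v, v⟫ / ‖v‖ ^ 2) ^ 2) := by
  have hu2 : ContDiffAt ℝ 2 u x := hu.of_le (by norm_num)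
  have hd : HasFDerivAt (∇ u) H x := hH ▸ (differentiableAt_gradient hu2).hasFDerivAt
  have hd2 : DifferentiableAt ℝ (fderiv ℝ (∇ u)) x :=
    ((contDiffAt_gradient hu (m := 2) (by norm_num)).fderiv_right (m := 1)
      (by norm_num)).differentiableAt (by norm_num)
  have hleft : HasLineDerivAt ℝ (fun y => pTrace p (∇ u y) (fderiv ℝ (∇ u) y)) _ x v :=
    hasDerivAt_pTrace p (hd.hasLineDerivAt v) (hd2.hasFDerivAt.hasLineDerivAt v)
      (by simpa [hv] using h0)
  have hcomp : HasFDerivAt (fun y => ‖∇ u y‖ ^ σ) _ x :=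
    (hasFDerivAt_norm_rpow_of_ne_zero σ (hv.symm ▸ h0)).comp x hd
  have hderiv := (hleft.congr_of_eventuallyEq (EventuallyEq.symm heq)).unique
    (hcomp.hasLineDerivAt v)
  have hsymm : ⟪H (H v), v⟫ = ‖H v‖ ^ 2 := by
    rw [← hH, inner_fderiv_gradient_comm hu2, real_inner_self_eq_norm_sq]
  have hpow : ‖v‖ ^ (σ - 2) = ‖v‖ ^ σ / ‖v‖ ^ 2 := by
    rw [Real.rpow_sub (norm_pos_iff.2 h0), Real.rpow_two]
  simp only [zero_smul, add_zero, hv, hH, hsymm, hpow, real_inner_self_eq_norm_sq,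
    ContinuousLinearMap.comp_apply, smul_apply, innerSL_apply_apply, smul_eq_mul,
    real_inner_comm (H v) v] at hderiv
  linear_combination hderiv

theorem pTrace_fderiv_gradient_norm_gradient_sq (hu : ContDiffAt ℝ 3 u x) (hv : ∇ u x = v)
    (hH : fderiv ℝ (∇ u) x = H) (h0 : v ≠ 0)
    (heq : ∀ᶠ y in 𝓝 x, pTrace p (∇ u y) (fderiv ℝ (∇ u) y) = ‖∇ u y‖ ^ σ) :
    pTrace p v (fderiv ℝ (∇ fun y => ‖∇ u y‖ ^ 2) x) =
      2 * (LinearMap.trace ℝ E (H ∘L H) + σ * ‖v‖ ^ σ * (⟪H v, v⟫ / ‖v‖ ^ 2) -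
        (p - 2) * (‖H v‖ ^ 2 / ‖v‖ ^ 2 - 2 * (⟪H v, v⟫ / ‖v‖ ^ 2) ^ 2)) := by
  have hsymm : ⟪H (H v), v⟫ = ‖H v‖ ^ 2 := by
    rw [← hH, inner_fderiv_gradient_comm (hu.of_le (by norm_num)), real_inner_self_eq_norm_sq]
  have hHH : pTrace p v (H ∘L H) =
      LinearMap.trace ℝ E (H ∘L H) + (p - 2) * (‖H v‖ ^ 2 / ‖v‖ ^ 2) := by
    rw [pTrace, ContinuousLinearMap.comp_apply, hsymm]
  rw [fderiv_gradient_norm_gradient_sq hu, hv, hH, pTrace_smul, pTrace_add, hHH,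
    pTrace_fderiv_fderiv_gradient hu hv hH h0 heq]
  ring

theorem sq_trace_le_finrank_mul_trace_comp (hH : ∀ a b, ⟪H a, b⟫ = ⟪a, H b⟫) :
    LinearMap.trace ℝ E H ^ 2 ≤ Module.finrank ℝ E * LinearMap.trace ℝ E (H ∘L H) := by
  let b := stdOrthonormalBasis ℝ E
  have hsq (i) : ⟪b i, H (b i)⟫ ^ 2 ≤ ⟪b i, H (H (b i))⟫ := by
    rw [← hH (b i) (H (b i)), real_inner_self_eq_norm_sq, ← sq_abs]
    gcongr
    simpa using abs_real_inner_le_norm (b i) (H (b i))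
  rw [LinearMap.trace_eq_sum_inner _ b, LinearMap.trace_eq_sum_inner _ b]
  calc (∑ i, ⟪b i, H (b i)⟫) ^ 2 ≤ _ := sq_sum_le_card_mul_sum_sq
    _ ≤ Module.finrank ℝ E * ∑ i, ⟪b i, H (H (b i))⟫ := by
        rw [Finset.card_univ, Fintype.card_fin]
        gcongr with i
        exact hsq i

theorem norm_gradient_rpow_sq_le_pTrace (hu : ContDiffAt ℝ 3 u x) (hv : ∇ u x = v)
    (hH : fderiv ℝ (∇ u) x = H) (h0 : v ≠ 0)
    (heq : ∀ᶠ y in 𝓝 x, pTrace p (∇ u y) (fderiv ℝ (∇ u) y) = ‖∇ u y‖ ^ σ) :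
    (‖v‖ ^ σ) ^ 2 ≤
      2 * Module.finrank ℝ E * pTrace p v (fderiv ℝ (∇ fun y => ‖∇ u y‖ ^ 2) x) +
        4 * ((Module.finrank ℝ E * σ) ^ 2 + Module.finrank ℝ E * |p - 2| + (p - 2) ^ 2) *
          (‖H v‖ ^ 2 / ‖v‖ ^ 2) := by
  have hident := pTrace_fderiv_gradient_norm_gradient_sq hu hv hH h0 heq
  have htrace : LinearMap.trace ℝ E H = ‖v‖ ^ σ - (p - 2) * (⟪H v, v⟫ / ‖v‖ ^ 2) := by
    rw [← hv, ← heq.self_of_nhds, pTrace, hH]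
    ring
  have hnewton := sq_trace_le_finrank_mul_trace_comp (H := H) fun a b => by
    rw [← hH, inner_fderiv_gradient_comm (hu.of_le (by norm_num))]
  have hCS : (⟪H v, v⟫ / ‖v‖ ^ 2) ^ 2 ≤ ‖H v‖ ^ 2 / ‖v‖ ^ 2 := by
    have hsq : ⟪H v, v⟫ ^ 2 ≤ (‖H v‖ * ‖v‖) ^ 2 := sq_le_sq'
      (neg_le_of_abs_le (abs_real_inner_le_norm _ _)) (real_inner_le_norm _ _)
    rw [div_pow, div_le_div_iff₀ (by positivity) (by positivity)]
    nlinarith [sq_nonneg ‖v‖]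
  refine sq_le_of_bernstein_identity (Nat.cast_nonneg _) hCS ?_ hident
  rwa [← htrace]

end Bernstein

section SecondOrder

theorem deriv_deriv_nonpos_of_isLocalMax {g : ℝ → ℝ} {t : ℝ} (hmax : IsLocalMax g t)
    (hg : ContinuousAt g t) : deriv (deriv g) t ≤ 0 := by
  by_contra! hpos
  have hmin : IsLocalMin g t := isLocalMin_of_deriv_deriv_pos hpos hmax.deriv_eq_zero hg
  have hconst : g =ᶠ[𝓝 t] fun _ => g t := by
    filter_upwards [hmax, hmin] with s hle hge using le_antisymm hle hge
  have hzero : deriv (deriv g) t = 0 := by simpa using hconst.deriv.deriv_eq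
  exact hpos.ne' hzero

theorem inner_nonpos_of_isLocalMax [CompleteSpace E] {f : E → ℝ} {G : E → E} {A : E →L[ℝ] E}
    {x : E} (hmax : IsLocalMax f x) (hf : ∀ᶠ y in 𝓝 x, HasGradientAt f (G y) y)
    (hG : HasFDerivAt G A x) (e : E) : ⟪A e, e⟫ ≤ 0 := by
  have hline (t : ℝ) : HasDerivAt (fun s : ℝ => x + s • e) e t := by
    simpa using ((hasDerivAt_id t).smul_const e).const_add x
  have htend : Tendsto (fun s : ℝ => x + s • e) (𝓝 0) (𝓝 x) := by
    simpa using (hline 0).continuousAt.tendsto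
  have hderiv : deriv (fun s : ℝ => f (x + s • e)) =ᶠ[𝓝 0] fun s => ⟪G (x + s • e), e⟫ := by
    filter_upwards [htend.eventually hf] with s hs
    exact (hs.hasFDerivAt.comp_hasDerivAt s (hline s)).deriv
  have hderiv2 : HasDerivAt (fun s : ℝ => ⟪G (x + s • e), e⟫) ⟪A e, e⟫ 0 := by
    simpa using HasDerivAt.inner ℝ (hG.hasLineDerivAt e) (hasDerivAt_const (0 : ℝ) e)
  rw [← hderiv2.deriv, ← hderiv.deriv_eq]
  have hmax' : IsLocalMax (fun s : ℝ => f (x + s • e)) 0 := by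
    simpa [IsLocalMax, IsMaxFilter] using htend.eventually hmax
  exact deriv_deriv_nonpos_of_isLocalMax hmax'
    (hf.self_of_nhds.hasFDerivAt.hasLineDerivAt e).continuousAt

end SecondOrder

/-- `r² - ‖y - c‖²`, positive exactly inside the ball of radius `r`. Its negative powers are the
barriers that blow up on the boundary sphere. -/
def ballGap {F : Type*} [NormedAddCommGroup F] (c : F) (r : ℝ) (y : F) : ℝ := r ^ 2 - ‖y - c‖ ^ 2

section BallGap

variable {F : Type*} [NormedAddCommGroup F] {c x : F} {r m : ℝ} {f : F → ℝ}

theorem continuous_ballGap : Continuous (ballGap c r) := by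
  unfold ballGap
  fun_prop

theorem mem_ball_iff_ballGap_pos (hr : 0 ≤ r) : x ∈ ball c r ↔ 0 < ballGap c r x := by
  rw [mem_ball_iff_norm, ballGap, sub_pos, sq_lt_sq₀ (norm_nonneg _) hr]

theorem mem_closedBall_iff_ballGap_nonneg (hr : 0 ≤ r) :
    x ∈ closedBall c r ↔ 0 ≤ ballGap c r x := by
  rw [mem_closedBall_iff_norm, ballGap, sub_nonneg, sq_le_sq₀ (norm_nonneg _) hr]

theorem exists_isLocalMax_mul_ballGap_rpow [ProperSpace F] (hr : 0 < r) (hm : 0 < m)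
    (hf : ContinuousOn f (closedBall c r)) (hc : 0 < f c) :
    ∃ x ∈ ball c r, 0 < f x ∧ f c * (r ^ 2) ^ m ≤ f x * ballGap c r x ^ m ∧
      IsLocalMax (fun y => f y * ballGap c r y ^ m) x := by
  have hcont : ContinuousOn (fun y => f y * ballGap c r y ^ m) (closedBall c r) :=
    hf.mul (continuous_ballGap.continuousOn.rpow_const fun _ _ => Or.inr hm.le)
  obtain ⟨x, hx, hmax⟩ := (isCompact_closedBall c r).exists_isMaxOn
    ⟨c, mem_closedBall_self hr.le⟩ hcont
  have hcx : f c * (r ^ 2) ^ m ≤ f x * ballGap c r x ^ m := by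
    simpa [ballGap] using hmax (mem_closedBall_self hr.le)
  have hpos : 0 < f x * ballGap c r x ^ m := lt_of_lt_of_le (by positivity) hcx
  have hgap : 0 < ballGap c r x := by
    refine ((mem_closedBall_iff_ballGap_nonneg hr.le).1 hx).lt_of_ne fun h => ?_
    simp [← h, Real.zero_rpow hm.ne'] at hpos
  have hball : x ∈ ball c r := (mem_ball_iff_ballGap_pos hr.le).2 hgap
  exact ⟨x, hball, pos_of_mul_pos_left hpos (by positivity), hcx,
    hmax.isLocalMax (closedBall_mem_nhds_of_mem hball)⟩

theorem isLocalMax_sub_ballGap_rpow_neg (hx : 0 < ballGap c r x)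
    (hmax : IsLocalMax (fun y => f y * ballGap c r y ^ m) x) :
    IsLocalMax (fun y => f y - f x * ballGap c r x ^ m * ballGap c r y ^ (-m)) x := by
  filter_upwards [hmax, continuous_ballGap.continuousAt.eventually_const_lt hx] with y hy hpos
  have hpow {z : F} (hz : 0 < ballGap c r z) : 0 < ballGap c r z ^ m := Real.rpow_pos_of_pos hz m
  rw [Real.rpow_neg hpos.le, Real.rpow_neg hx.le, mul_inv_cancel_right₀ (hpow hx).ne', sub_self,
    sub_nonpos, ← div_eq_mul_inv, le_div_iff₀ (hpow hpos)]
  exact hy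

end BallGap

section TouchingBarrier

variable [CompleteSpace E] {c x : E} {r m : ℝ} {f : E → ℝ}

theorem hasGradientAt_ballGap_rpow_neg (m : ℝ) (hx : 0 < ballGap c r x) :
    HasGradientAt (fun y => ballGap c r y ^ (-m))
      ((2 * m * ballGap c r x ^ (-(m + 1))) • (x - c)) x := by
  have hgap : HasFDerivAt (ballGap c r) _ x :=
    ((hasFDerivAt_id x).sub_const c).norm_sq.const_sub (r ^ 2)
  refine (hgap.rpow_const (p := -m) (Or.inl hx.ne')).congr_fderiv ?_
  ext a
  simp
  ring_nf

theorem hasFDerivAt_gradient_ballGap_rpow_neg (m : ℝ) (hx : 0 < ballGap c r x) :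
    HasFDerivAt (fun y => (2 * m * ballGap c r y ^ (-(m + 1))) • (y - c))
      ((2 * m * ballGap c r x ^ (-(m + 1))) • ContinuousLinearMap.id ℝ E +
        ((4 * m * (m + 1) * ballGap c r x ^ (-(m + 2))) • innerSL ℝ (x - c)).smulRight (x - c))
      x := by
  refine (((hasGradientAt_ballGap_rpow_neg (m + 1) hx).hasFDerivAt.const_mul (2 * m)).smul
    ((hasFDerivAt_id x).sub_const c)).congr_fderiv ?_
  ext a
  simp [add_assoc, one_add_one_eq_two]
  ring_nf

theorem gradient_eq_of_isLocalMax_mul_ballGap_rpow (hx : 0 < ballGap c r x)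
    (hmax : IsLocalMax (fun y => f y * ballGap c r y ^ m) x) (hf : DifferentiableAt ℝ f x) :
    ∇ f x = (2 * m * f x / ballGap c r x) • (x - c) := by
  have hd := hf.hasGradientAt.hasFDerivAt.sub
    ((hasGradientAt_ballGap_rpow_neg m hx).hasFDerivAt.const_mul (f x * ballGap c r x ^ m))
  have hzero := (isLocalMax_sub_ballGap_rpow_neg hx hmax).hasFDerivAt_eq_zero hd
  rw [← map_smul, sub_eq_zero] at hzero
  rw [(InnerProductSpace.toDual ℝ E).injective hzero, smul_smul, Real.rpow_neg hx.le,
    Real.rpow_add_one hx.ne']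
  congr 1
  field_simp

theorem inner_fderiv_gradient_le_of_isLocalMax_mul_ballGap_rpow (hx : 0 < ballGap c r x)
    (hmax : IsLocalMax (fun y => f y * ballGap c r y ^ m) x) (hf : ContDiffAt ℝ 2 f x) (e : E) :
    ⟪fderiv ℝ (∇ f) x e, e⟫ ≤ 2 * m * f x / ballGap c r x * ‖e‖ ^ 2 +
      4 * m * (m + 1) * f x / ballGap c r x ^ 2 * ⟪x - c, e⟫ ^ 2 := by
  set K := f x * ballGap c r x ^ m with hK
  have hgrad : ∀ᶠ y in 𝓝 x, HasGradientAt (fun y => f y - K * ballGap c r y ^ (-m))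
      (∇ f y - K • (2 * m * ballGap c r y ^ (-(m + 1))) • (y - c)) y := by
    filter_upwards [hf.eventually (by simp),
      continuous_ballGap.continuousAt.eventually_const_lt hx] with y hy hpos
    refine ((hy.differentiableAt (by norm_num)).hasGradientAt.hasFDerivAt.sub
      ((hasGradientAt_ballGap_rpow_neg m hpos).hasFDerivAt.const_mul K)).congr_fderiv ?_
    rw [map_sub, map_smul _ K]
  have h := inner_nonpos_of_isLocalMax (isLocalMax_sub_ballGap_rpow_neg hx hmax) hgrad
    ((differentiableAt_gradient hf).hasFDerivAt.sub
      ((hasFDerivAt_gradient_ballGap_rpow_neg m hx).const_smul K)) e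
  have hpow1 : K * ballGap c r x ^ (-(m + 1)) = f x / ballGap c r x := by
    rw [hK, Real.rpow_neg hx.le, Real.rpow_add_one hx.ne']
    field_simp
  have hpow2 : K * ballGap c r x ^ (-(m + 2)) = f x / ballGap c r x ^ 2 := by
    rw [hK, Real.rpow_neg hx.le, Real.rpow_add hx, Real.rpow_two]
    field_simp
  simp only [sub_apply, add_apply, smul_apply, ContinuousLinearMap.smulRight_apply,
    ContinuousLinearMap.id_apply, innerSL_apply_apply, inner_sub_left (fderiv ℝ (∇ f) x e),
    inner_add_left, real_inner_smul_left, real_inner_self_eq_norm_sq, smul_eq_mul] at h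
  linear_combination h + 2 * m * ‖e‖ ^ 2 * hpow1 + 4 * m * (m + 1) * ⟪x - c, e⟫ ^ 2 * hpow2

end TouchingBarrier

section InteriorEstimate

variable [FiniteDimensional ℝ E] {c x v : E} {p σ r m : ℝ}

theorem pTrace_fderiv_gradient_le_of_isLocalMax_mul_ballGap_rpow {f : E → ℝ} (hp : 1 ≤ p)
    (hm : 0 ≤ m) (hv : v ≠ 0) (hx : 0 < ballGap c r x) (hfx : 0 ≤ f x)
    (hmax : IsLocalMax (fun y => f y * ballGap c r y ^ m) x) (hf : ContDiffAt ℝ 2 f x) :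
    pTrace p v (fderiv ℝ (∇ f) x) ≤
      p * (2 * m * Module.finrank ℝ E + 4 * m * (m + 1)) * (f x * r ^ 2 / ballGap c r x ^ 2) := by
  have hdist : ‖x - c‖ ^ 2 ≤ r ^ 2 := (sub_pos.1 hx).le
  have hinv : f x / ballGap c r x ≤ f x * r ^ 2 / ballGap c r x ^ 2 := by
    rw [div_le_div_iff₀ hx (by positivity), mul_assoc, sq (ballGap c r x)]
    gcongr
    exact sub_le_self _ (sq_nonneg _)
  calc pTrace p v (fderiv ℝ (∇ f) x)
      ≤ p * (2 * m * f x / ballGap c r x * Module.finrank ℝ E +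
          4 * m * (m + 1) * f x / ballGap c r x ^ 2 * ‖x - c‖ ^ 2) :=
        pTrace_le hp hv (by positivity) (by positivity)
          (inner_fderiv_gradient_le_of_isLocalMax_mul_ballGap_rpow hx hmax hf)
    _ = p * (2 * m * Module.finrank ℝ E * (f x / ballGap c r x) +
          4 * m * (m + 1) * (f x * ‖x - c‖ ^ 2 / ballGap c r x ^ 2)) := by ring
    _ ≤ p * (2 * m * Module.finrank ℝ E * (f x * r ^ 2 / ballGap c r x ^ 2) +
          4 * m * (m + 1) * (f x * r ^ 2 / ballGap c r x ^ 2)) := by gcongr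
    _ = _ := by ring

/-- The constant of the interior gradient estimate in dimension `n`, for a right-hand side of
degree `σ` and the barrier of exponent `m`. -/
def bernsteinConst (n p σ m : ℝ) : ℝ :=
  2 * n * (p * (2 * m * n + 4 * m * (m + 1))) +
    4 * ((n * σ) ^ 2 + n * |p - 2| + (p - 2) ^ 2) * m ^ 2

theorem bernsteinConst_nonneg {n : ℝ} (hn : 0 ≤ n) (hp : 0 ≤ p) (hm : 0 ≤ m) :
    0 ≤ bernsteinConst n p σ m := by
  unfold bernsteinConst
  positivity

variable {u : E → ℝ}

theorem rpow_sq_le_bernsteinConst_mul_of_isLocalMax (hp : 1 ≤ p) (hm : 0 ≤ m)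
    (hu : ContDiffAt ℝ 3 u x) (h0 : ∇ u x ≠ 0)
    (heq : ∀ᶠ y in 𝓝 x, pTrace p (∇ u y) (fderiv ℝ (∇ u) y) = ‖∇ u y‖ ^ σ)
    (hx : 0 < ballGap c r x)
    (hmax : IsLocalMax (fun y => ‖∇ u y‖ ^ 2 * ballGap c r y ^ m) x) :
    (‖∇ u x‖ ^ σ) ^ 2 ≤ bernsteinConst (Module.finrank ℝ E) p σ m *
      (‖∇ u x‖ ^ 2 * r ^ 2 / ballGap c r x ^ 2) := by
  have hz : ContDiffAt ℝ 2 (fun y => ‖∇ u y‖ ^ 2) x :=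
    (contDiffAt_gradient hu (by norm_num)).norm_sq ℝ
  have hsecond := pTrace_fderiv_gradient_le_of_isLocalMax_mul_ballGap_rpow hp hm h0 hx
    (sq_nonneg _) hmax hz
  have hfirst : fderiv ℝ (∇ u) x (∇ u x) = (m * ‖∇ u x‖ ^ 2 / ballGap c r x) • (x - c) := by
    have hgrad := gradient_eq_of_isLocalMax_mul_ballGap_rpow hx hmax
      (hz.differentiableAt (by norm_num))
    rw [(hasGradientAt_norm_gradient_sq (hu.of_le (by norm_num))).gradient] at hgrad
    refine smul_right_injective E (two_ne_zero (α := ℝ)) (hgrad.trans ?_)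
    module
  have hdrift : ‖fderiv ℝ (∇ u) x (∇ u x)‖ ^ 2 / ‖∇ u x‖ ^ 2 ≤
      m ^ 2 * (‖∇ u x‖ ^ 2 * r ^ 2 / ballGap c r x ^ 2) := by
    have hdist : ‖x - c‖ ^ 2 ≤ r ^ 2 := (sub_pos.1 hx).le
    calc _ = m ^ 2 * (‖∇ u x‖ ^ 2 * ‖x - c‖ ^ 2 / ballGap c r x ^ 2) := by
          rw [hfirst, norm_smul, mul_pow, Real.norm_eq_abs, sq_abs]
          field_simp [norm_ne_zero_iff.2 h0]
      _ ≤ _ := by gcongr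
  set n : ℝ := ↑(Module.finrank ℝ E)
  set B := ‖∇ u x‖ ^ 2 * r ^ 2 / ballGap c r x ^ 2
  calc (‖∇ u x‖ ^ σ) ^ 2 ≤ _ := norm_gradient_rpow_sq_le_pTrace hu rfl rfl h0 heq
    _ ≤ 2 * n * (p * (2 * m * n + 4 * m * (m + 1)) * B) +
          4 * ((n * σ) ^ 2 + n * |p - 2| + (p - 2) ^ 2) * (m ^ 2 * B) := by gcongr
    _ = bernsteinConst n p σ m * B := by
      unfold bernsteinConst
      ring

theorem rpow_sq_mul_sq_le_of_sq_mul_rpow_le {a b s t δ : ℝ} (hδ : 0 < δ) (ha : 0 ≤ a)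
    (hb : 0 ≤ b) (hs : 0 ≤ s) (ht : 0 ≤ t) (h : a ^ 2 * s ^ (2 / δ) ≤ b ^ 2 * t ^ (2 / δ)) :
    (a ^ δ) ^ 2 * s ^ 2 ≤ (b ^ δ) ^ 2 * t ^ 2 := by
  have hpow {w : ℝ} (hw : 0 ≤ w) : (w ^ (2 / δ)) ^ δ = w ^ 2 := by
    rw [← Real.rpow_mul hw, div_mul_cancel₀ _ hδ.ne', Real.rpow_two]
  have h' := Real.rpow_le_rpow (by positivity) h hδ.le
  rwa [Real.mul_rpow (by positivity) (by positivity), Real.mul_rpow (by positivity) (by positivity),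
    hpow hs, hpow ht, ← Real.rpow_pow_comm ha, ← Real.rpow_pow_comm hb] at h'

theorem sq_mul_norm_gradient_rpow_le (hp : 1 ≤ p) (hσ : 1 < σ) (hr : 0 < r)
    (hcont : ContinuousOn (∇ u) (closedBall c r))
    (hu : ∀ x ∈ ball c r, ∇ u x ≠ 0 → ContDiffAt ℝ 3 u x)
    (heq : ∀ x ∈ ball c r, ∇ u x ≠ 0 →
      pTrace p (∇ u x) (fderiv ℝ (∇ u) x) = ‖∇ u x‖ ^ σ) :
    (r * ‖∇ u c‖ ^ (σ - 1)) ^ 2 ≤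
      bernsteinConst (Module.finrank ℝ E) p σ (2 / (σ - 1)) := by
  have hσ0 : 0 < σ - 1 := sub_pos.2 hσ
  -- With this exponent the barrier balances `‖∇u‖^(2σ)`: `(ballGap ^ m) ^ (σ - 1) = ballGap ^ 2`.
  set m := 2 / (σ - 1)
  have hm0 : 0 < m := by positivity
  rcases eq_or_ne (∇ u c) 0 with hc | hc
  · rw [hc, norm_zero, Real.zero_rpow hσ0.ne', mul_zero, zero_pow two_ne_zero]
    exact bernsteinConst_nonneg (Nat.cast_nonneg _) (zero_le_one.trans hp) hm0.le
  obtain ⟨x, hx, hzx, hcx, hmax⟩ := exists_isLocalMax_mul_ballGap_rpow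
    (f := fun y => ‖∇ u y‖ ^ 2) hr hm0 (hcont.norm.pow 2) (pow_pos (norm_pos_iff.2 hc) 2)
  have hgap : 0 < ballGap c r x := (mem_ball_iff_ballGap_pos hr.le).1 hx
  have hv : ∇ u x ≠ 0 := fun h => by simp [h] at hzx
  have hv' : 0 < ‖∇ u x‖ := norm_pos_iff.2 hv
  have hnear : ∀ᶠ y in 𝓝 x, y ∈ ball c r ∧ ∇ u y ≠ 0 :=
    (isOpen_ball.eventually_mem hx).and
      ((hcont.continuousAt (closedBall_mem_nhds_of_mem hx)).eventually_ne hv)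
  have hmain := rpow_sq_le_bernsteinConst_mul_of_isLocalMax hp hm0.le
    (hu x hx hv) hv (hnear.mono fun y hy => heq y hy.1 hy.2) hgap hmax
  have hsource : (‖∇ u x‖ ^ (σ - 1)) ^ 2 * ballGap c r x ^ 2 ≤
      bernsteinConst (Module.finrank ℝ E) p σ m * r ^ 2 := by
    rw [Real.rpow_sub_one hv'.ne', div_pow, div_mul_eq_mul_div, div_le_iff₀ hzx]
    calc _ ≤ _ := mul_le_mul_of_nonneg_right hmain (sq_nonneg (ballGap c r x))
      _ = _ := by field_simp
  have hbarrier := rpow_sq_mul_sq_le_of_sq_mul_rpow_le hσ0 (norm_nonneg _) (norm_nonneg _)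
    (sq_nonneg r) hgap.le hcx
  refine le_of_mul_le_mul_right ?_ (sq_pos_of_pos hr)
  linear_combination hbarrier.trans hsource

end InteriorEstimate

section LimitAtInfinity

variable {F : Type*} [NormedAddCommGroup F] [NormedSpace ℝ F] {u : E → F} {K θ ρ R : ℝ}

theorem norm_sub_le_of_norm_fderiv_le_rpow_of_ray {e : E} {s : ℝ} (he : ‖e‖ = 1) (hθ : 1 < θ)
    (hρ : 0 < ρ) (hs : ρ ≤ s) (hd : ∀ x, ρ ≤ ‖x‖ → DifferentiableAt ℝ u x)
    (hle : ∀ x, ρ ≤ ‖x‖ → ‖fderiv ℝ u x‖ ≤ K * ‖x‖ ^ (-θ)) :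
    ‖u (s • e) - u (ρ • e)‖ ≤ K / (θ - 1) * (ρ ^ (1 - θ) - s ^ (1 - θ)) := by
  have hnorm {t : ℝ} (ht : ρ ≤ t) : ‖t • e‖ = t := by
    rw [norm_smul, he, mul_one, Real.norm_of_nonneg (hρ.le.trans ht)]
  have hray (t : ℝ) (ht : ρ ≤ t) :
      HasDerivAt (fun t : ℝ => u (t • e) - u (ρ • e)) (fderiv ℝ u (t • e) e) t := by
    have hline : HasDerivAt (fun t : ℝ => t • e) e t := by
      simpa using (hasDerivAt_id t).smul_const e
    exact ((hd _ (by rwa [hnorm ht])).hasFDerivAt.comp_hasDerivAt t hline).sub_const _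
  have hbound (t : ℝ) (ht : ρ ≤ t) :
      HasDerivAt (fun t => K / (θ - 1) * (ρ ^ (1 - θ) - t ^ (1 - θ))) (K * t ^ (-θ)) t := by
    have h := ((Real.hasDerivAt_rpow_const (p := 1 - θ) (Or.inl (hρ.trans_le ht).ne')).const_sub
      (ρ ^ (1 - θ))).const_mul (K / (θ - 1))
    refine h.congr_deriv ?_
    rw [sub_sub_cancel_left]
    field_simp [(sub_pos.2 hθ).ne']
    ring
  refine image_norm_le_of_norm_deriv_right_le_deriv_boundary'
    (fun t ht => (hray t ht.1).continuousAt.continuousWithinAt)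
    (fun t ht => (hray t ht.1).hasDerivWithinAt) (by simp)
    (fun t ht => (hbound t ht.1).continuousAt.continuousWithinAt)
    (fun t ht => (hbound t ht.1).hasDerivWithinAt) (fun t ht => ?_) ⟨hs, le_rfl⟩
  calc ‖fderiv ℝ u (t • e) e‖ ≤ ‖fderiv ℝ u (t • e)‖ := by
        simpa [he] using (fderiv ℝ u (t • e)).le_opNorm e
    _ ≤ K * t ^ (-θ) := by simpa [hnorm ht.1] using hle (t • e) (by rw [hnorm ht.1]; exact ht.1)

theorem half_le_norm_of_mem_segment {x y z : E} (hρ : 0 ≤ ρ) (hx : ρ ≤ ‖x‖) (hy : ρ ≤ ‖y‖)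
    (hxy : 0 ≤ ⟪x, y⟫) (hz : z ∈ segment ℝ x y) : ρ / 2 ≤ ‖z‖ := by
  obtain ⟨a, b, ha, hb, hab, rfl⟩ := hz
  refine le_of_sq_le_sq ?_ (norm_nonneg _)
  have hab' : 1 / 4 ≤ a ^ 2 + b ^ 2 := by nlinarith [sq_nonneg (a - b)]
  calc (ρ / 2) ^ 2 = 1 / 4 * ρ ^ 2 := by ring
    _ ≤ (a ^ 2 + b ^ 2) * ρ ^ 2 := by gcongr
    _ ≤ a ^ 2 * ‖x‖ ^ 2 + 2 * (a * (b * ⟪x, y⟫)) + b ^ 2 * ‖y‖ ^ 2 := by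
        have hx' : a ^ 2 * ρ ^ 2 ≤ a ^ 2 * ‖x‖ ^ 2 := by gcongr
        have hy' : b ^ 2 * ρ ^ 2 ≤ b ^ 2 * ‖y‖ ^ 2 := by gcongr
        have hcross : 0 ≤ a * (b * ⟪x, y⟫) := by positivity
        linarith
    _ = ‖a • x + b • y‖ ^ 2 := by
        rw [norm_add_sq_real, norm_smul_of_nonneg ha, norm_smul_of_nonneg hb, mul_pow, mul_pow,
          real_inner_smul_left, real_inner_smul_right]

theorem exists_ne_zero_inner_eq_zero (hE : 1 < Module.rank ℝ E) (x : E) :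
    ∃ v : E, v ≠ 0 ∧ ⟪x, v⟫ = 0 := by
  have hspan : Submodule.span ℝ {x} ≠ ⊤ := fun h => by
    have hrank := rank_span_le (R := ℝ) {x}
    rw [h, rank_top, Cardinal.mk_singleton] at hrank
    exact hE.not_ge hrank
  obtain ⟨v, hv, h0⟩ := Submodule.exists_mem_ne_zero_of_ne_bot
    (mt Submodule.orthogonal_eq_bot_iff.1 hspan)
  exact ⟨v, h0, Submodule.mem_orthogonal_singleton_iff_inner_right.1 hv⟩

theorem exists_norm_eq_inner_nonneg (hE : 1 < Module.rank ℝ E) (hρ : 0 ≤ ρ) (x y : E) :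
    ∃ w : E, ‖w‖ = ρ ∧ 0 ≤ ⟪x, w⟫ ∧ 0 ≤ ⟪w, y⟫ := by
  obtain ⟨v, h0, hxv⟩ := exists_ne_zero_inner_eq_zero hE x
  have hnorm : ‖(ρ / ‖v‖) • v‖ = ρ := by
    rw [norm_smul_of_nonneg (by positivity), div_mul_cancel₀ _ (norm_ne_zero_iff.2 h0)]
  have horth : ⟪x, (ρ / ‖v‖) • v⟫ = 0 := by rw [real_inner_smul_right, hxv, mul_zero]
  rcases le_total 0 ⟪(ρ / ‖v‖) • v, y⟫ with h | h
  · exact ⟨(ρ / ‖v‖) • v, hnorm, horth.ge, h⟩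
  · exact ⟨-((ρ / ‖v‖) • v), by rwa [norm_neg], by rw [inner_neg_right, horth, neg_zero],
      by rwa [inner_neg_left, neg_nonneg]⟩

theorem norm_sub_le_of_norm_fderiv_le_rpow_of_inner_nonneg {x y : E} (hK : 0 ≤ K) (hθ : 0 ≤ θ)
    (hρ : 0 < ρ) (hd : ∀ x, ρ / 2 ≤ ‖x‖ → DifferentiableAt ℝ u x)
    (hle : ∀ x, ρ / 2 ≤ ‖x‖ → ‖fderiv ℝ u x‖ ≤ K * ‖x‖ ^ (-θ)) (hx : ‖x‖ = ρ) (hy : ‖y‖ = ρ)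
    (hxy : 0 ≤ ⟪x, y⟫) : ‖u x - u y‖ ≤ 4 * K * (ρ / 2) ^ (1 - θ) := by
  have hfar {z : E} (hz : z ∈ segment ℝ y x) : ρ / 2 ≤ ‖z‖ :=
    half_le_norm_of_mem_segment hρ.le hy.ge hx.ge (by rwa [real_inner_comm]) hz
  calc ‖u x - u y‖ ≤ K * (ρ / 2) ^ (-θ) * ‖x - y‖ :=
        (convex_segment y x).norm_image_sub_le_of_norm_fderiv_le (𝕜 := ℝ)
          (fun z hz => hd z (hfar hz))
          (fun z hz => (hle z (hfar hz)).trans <| mul_le_mul_of_nonneg_left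
            (Real.rpow_le_rpow_of_nonpos (by positivity) (hfar hz) (neg_nonpos.2 hθ)) hK)
          (left_mem_segment ℝ y x) (right_mem_segment ℝ y x)
    _ ≤ K * (ρ / 2) ^ (-θ) * (2 * ρ) := by
        gcongr
        linarith [norm_sub_le x y]
    _ = 4 * K * (ρ / 2) ^ (1 - θ) := by
        rw [sub_eq_neg_add, Real.rpow_add_one (by positivity)]
        ring

theorem norm_sub_le_of_norm_fderiv_le_rpow (hE : 1 < Module.rank ℝ E) (hK : 0 ≤ K) (hθ : 1 < θ)
    (hρ : 0 < ρ) (hd : ∀ x, ρ / 2 ≤ ‖x‖ → DifferentiableAt ℝ u x)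
    (hle : ∀ x, ρ / 2 ≤ ‖x‖ → ‖fderiv ℝ u x‖ ≤ K * ‖x‖ ^ (-θ)) {x y : E} (hx : ρ ≤ ‖x‖)
    (hy : ρ ≤ ‖y‖) :
    ‖u x - u y‖ ≤ 2 * (K / (θ - 1) * ρ ^ (1 - θ)) + 8 * K * (ρ / 2) ^ (1 - θ) := by
  have hhalf {t : ℝ} (ht : ρ ≤ t) : ρ / 2 ≤ t := (half_le_self hρ.le).trans ht
  have hproj {z : E} (hz : ρ ≤ ‖z‖) :
      ∃ z', ‖z'‖ = ρ ∧ ‖u z - u z'‖ ≤ K / (θ - 1) * ρ ^ (1 - θ) := by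
    have hz0 : 0 < ‖z‖ := hρ.trans_le hz
    have hunit : ‖‖z‖⁻¹ • z‖ = 1 := norm_smul_inv_norm (𝕜 := ℝ) (norm_pos_iff.1 hz0)
    refine ⟨ρ • ‖z‖⁻¹ • z, by rw [norm_smul_of_nonneg hρ.le, hunit, mul_one], ?_⟩
    have hray := norm_sub_le_of_norm_fderiv_le_rpow_of_ray hunit hθ hρ hz
      (fun x hx => hd x (hhalf hx)) (fun x hx => hle x (hhalf hx))
    rw [smul_inv_smul₀ hz0.ne'] at hray
    have hθ' : 0 ≤ K / (θ - 1) := div_nonneg hK (sub_pos.2 hθ).le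
    exact hray.trans (mul_le_mul_of_nonneg_left (sub_le_self _ (by positivity)) hθ')
  obtain ⟨x', hx', hxx'⟩ := hproj hx
  obtain ⟨y', hy', hyy'⟩ := hproj hy
  -- The direct segment between the projections may pass through the origin; those through w do not.
  obtain ⟨w, hw, hxw, hwy⟩ := exists_norm_eq_inner_nonneg hE hρ.le x' y'
  have hθ0 : 0 ≤ θ := zero_le_one.trans hθ.le
  have hx'w := norm_sub_le_of_norm_fderiv_le_rpow_of_inner_nonneg hK hθ0 hρ hd hle hx' hw hxw
  have hwy' := norm_sub_le_of_norm_fderiv_le_rpow_of_inner_nonneg hK hθ0 hρ hd hle hw hy' hwy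
  simp only [← dist_eq_norm] at hxx' hyy' hx'w hwy' ⊢
  linarith [dist_triangle4 (u x) (u x') (u w) (u y), dist_triangle (u w) (u y') (u y),
    dist_comm (u y) (u y')]

theorem exists_tendsto_cobounded_of_norm_fderiv_le_rpow [CompleteSpace F]
    (hE : 1 < Module.rank ℝ E) (hK : 0 ≤ K) (hθ : 1 < θ)
    (hd : ∀ x, R ≤ ‖x‖ → DifferentiableAt ℝ u x)
    (hle : ∀ x, R ≤ ‖x‖ → ‖fderiv ℝ u x‖ ≤ K * ‖x‖ ^ (-θ)) :
    ∃ M, Tendsto u (Bornology.cobounded E) (𝓝 M) := by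
  have : Nontrivial E := rank_pos_iff_nontrivial.1 (zero_lt_one.trans hE)
  rw [← cauchy_map_iff_exists_tendsto, Metric.cauchy_iff]
  refine ⟨inferInstance, fun ε hε => ?_⟩
  have hdecay : Tendsto
      (fun ρ => 2 * (K / (θ - 1) * ρ ^ (1 - θ)) + 8 * K * (ρ / 2) ^ (1 - θ)) atTop (𝓝 0) := by
    have hpow : Tendsto (fun ρ : ℝ => ρ ^ (1 - θ)) atTop (𝓝 0) := by
      simpa using tendsto_rpow_neg_atTop (sub_pos.2 hθ)
    simpa using ((hpow.const_mul (K / (θ - 1))).const_mul 2).add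
      ((hpow.comp (tendsto_id.atTop_div_const two_pos)).const_mul (8 * K))
  obtain ⟨ρ, hε', hρ0, hρR⟩ := ((hdecay.eventually_lt_const hε).and
    ((eventually_gt_atTop 0).and (eventually_ge_atTop (2 * R)))).exists
  have hR {x : E} (hx : ρ / 2 ≤ ‖x‖) : R ≤ ‖x‖ := by linarith
  refine ⟨u '' {x | ρ ≤ ‖x‖}, image_mem_map ?_, ?_⟩
  · exact tendsto_norm_cobounded_atTop.eventually_ge_atTop ρ
  · rintro _ ⟨x, hx, rfl⟩ _ ⟨y, hy, rfl⟩
    rw [dist_eq_norm]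
    exact (norm_sub_le_of_norm_fderiv_le_rpow hE hK hθ hρ0 (fun x hx => hd x (hR hx))
      (fun x hx => hle x (hR hx)) hx hy).trans_lt hε'

end LimitAtInfinity

namespace IsStrongSolution

variable {N : ℕ} {p q r : ℝ} {G : Set (EuclideanSpace ℝ (Fin N))}
  {u : EuclideanSpace ℝ (Fin N) → ℝ} {x c : EuclideanSpace ℝ (Fin N)}

theorem differentiableAt (hu : IsStrongSolution p q G u) (hG : IsOpen G) (hx : x ∈ G) :
    DifferentiableAt ℝ u x :=
  (hu.1.contDiffAt (hG.mem_nhds hx)).differentiableAt one_ne_zero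

theorem continuousOn_gradient (hu : IsStrongSolution p q G u) (hG : IsOpen G) :
    ContinuousOn (∇ u) G :=
  (InnerProductSpace.toDual ℝ _).symm.continuous.comp_continuousOn
    (hu.1.continuousOn_fderiv_of_isOpen hG le_rfl)

theorem contDiffAt (hu : IsStrongSolution p q G u) (hG : IsOpen G) (hx : x ∈ G)
    (h0 : ∇ u x ≠ 0) : ContDiffAt ℝ 3 u x :=
  hu.2.1.contDiffAt
    (((hu.continuousOn_gradient hG).isOpen_inter_preimage hG isOpen_ne).mem_nhds ⟨hx, h0⟩)

theorem pTrace_fderiv_gradient (hu : IsStrongSolution p q G u) (hG : IsOpen G) (hx : x ∈ G)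
    (h0 : ∇ u x ≠ 0) :
    pTrace p (∇ u x) (fderiv ℝ (∇ u) x) = ‖∇ u x‖ ^ (q - p + 2) := by
  have hv : 0 < ‖∇ u x‖ := norm_pos_iff.2 h0
  have hdiv := (hu.2.2 x hx).2
  have hA := (differentiableAt_gradient ((hu.contDiffAt hG hx h0).of_le (by norm_num))).hasFDerivAt
  unfold pGradField at hdiv
  rw [trace_fderiv_norm_rpow_smul hA h0] at hdiv
  rw [show q - p + 2 = q - (p - 2) by ring, Real.rpow_sub hv, ← hdiv,
    mul_div_cancel_left₀ _ (Real.rpow_pos_of_pos hv _).ne']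

theorem norm_gradient_le (hu : IsStrongSolution p q G u) (hG : IsOpen G) (hp : 1 ≤ p)
    (hq : p - 1 < q) (hr : 0 < r) (hball : closedBall c r ⊆ G) :
    ‖∇ u c‖ ≤ (√(bernsteinConst N p (q - p + 2) (2 / (q - p + 1))) / r) ^ (q - p + 1)⁻¹ := by
  have hδ : 0 < q - p + 1 := by linarith
  have hsq : (r * ‖∇ u c‖ ^ (q - p + 1)) ^ 2 ≤
      bernsteinConst N p (q - p + 2) (2 / (q - p + 1)) := by
    have h := sq_mul_norm_gradient_rpow_le (σ := q - p + 2) hp (by linarith) hr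
      ((hu.continuousOn_gradient hG).mono hball)
      (fun x hx => hu.contDiffAt hG (hball (ball_subset_closedBall hx)))
      (fun x hx => hu.pTrace_fderiv_gradient hG (hball (ball_subset_closedBall hx)))
    rwa [finrank_euclideanSpace_fin, show q - p + 2 - 1 = q - p + 1 by ring] at h
  rw [Real.le_rpow_inv_iff_of_pos (norm_nonneg _) (by positivity) hδ, le_div_iff₀' hr]
  exact Real.le_sqrt_of_sq_le hsq

theorem norm_fderiv_le_mul_rpow_norm {R : ℝ} (hu : IsStrongSolution p q (closedBall 0 R)ᶜ u)
    (hp : 1 ≤ p) (hq : p - 1 < q) (hR : 0 < R) (hx : 2 * R ≤ ‖x‖) :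
    ‖fderiv ℝ u x‖ ≤
      (3 * √(bernsteinConst N p (q - p + 2) (2 / (q - p + 1)))) ^ (q - p + 1)⁻¹ *
        ‖x‖ ^ (-(q - p + 1)⁻¹) := by
  have hx0 : 0 < ‖x‖ := by linarith
  have hball : closedBall x (‖x‖ / 3) ⊆ (closedBall 0 R)ᶜ := by
    rw [subset_compl_iff_disjoint_right]
    exact closedBall_disjoint_closedBall (by rw [dist_zero_right]; linarith)
  calc ‖fderiv ℝ u x‖ = ‖∇ u x‖ := by rw [← toDual_gradient, LinearIsometryEquiv.norm_map]
    _ ≤ _ := hu.norm_gradient_le isClosed_closedBall.isOpen_compl hp hq (by positivity) hball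
    _ = _ := by
      rw [Real.rpow_neg hx0.le, ← Real.inv_rpow hx0.le,
        ← Real.mul_rpow (by positivity) (by positivity)]
      congr 1
      field_simp

end IsStrongSolution

end

/-- A solution of (E) in an exterior domain has a limit at infinity when `p-1 < q < p`. -/
theorem limit_at_infinity (N : ℕ) (hN : 2 ≤ N) (p q : ℝ) (hp : 1 < p)
    (hq1 : p - 1 < q) (hq2 : q < p) (R : ℝ) (hR : 0 < R)
    (u : EuclideanSpace ℝ (Fin N) → ℝ)
    (hu : IsStrongSolution p q (Metric.closedBall (0 : EuclideanSpace ℝ (Fin N)) R)ᶜ u) :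
    ∃ M : ℝ, Filter.Tendsto u
      (Filter.comap (fun x : EuclideanSpace ℝ (Fin N) => ‖x‖) Filter.atTop) (nhds M) := by
  have hδ : 0 < q - p + 1 := by linarith
  have hθ : 1 < (q - p + 1)⁻¹ := (one_lt_inv₀ hδ).2 (by linarith)
  have hrank : 1 < Module.rank ℝ (EuclideanSpace ℝ (Fin N)) := by
    rw [← Module.finrank_eq_rank, finrank_euclideanSpace_fin]
    exact_mod_cast hN
  rw [comap_norm_atTop]
  refine exists_tendsto_cobounded_of_norm_fderiv_le_rpow (R := 2 * R) hrank (by positivity) hθ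
    (fun x hx => hu.differentiableAt isClosed_closedBall.isOpen_compl ?_)
    fun x hx => hu.norm_fderiv_le_mul_rpow_norm hp.le hq1 hR hx
  rw [mem_compl_iff, mem_closedBall_zero_iff]
  linarith
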